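/- arXiv:1710.06742 — 2 statements merged into one kernel-verified Lean document; each statement's English description precedes it below -/
import Mathlib

section
/- Let v ∈ V^k. If v vanishes at every tensor-product Gauss–Lobatto node (ξ_{i₁}, ξ_{i₂}, ξ_{i₃}) with i₁, i₂, i₃ ∈ {0, …, k}, then v = 0. -/
/-!
The proof is algebraic: it compares coefficients, and uses the nodes through their nodal polynomial
`L = ∏ s, (X - ξ s)`, of degree `k + 1`.

Write `E` for the Euler operator `∑ j, X j * ∂ j` and `D = div q`.  Then
`curl (r × q) = D r - (2 + E) q`, which is divergence free (`curl_cross_apply`, `div_coeff_curl`).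
So for `v = a + curl (r × q)` and a monomial `m` with `m i = k`, the top coefficient of `v i` at
`m + single i 1` is the coefficient of `D` at `m`, the same for every such `i` (`coeff_top_eq`).
Moreover `div v = div a` has degree at most `k - 1` in each variable (`div_coeff_eq_zero`).

Each `v i` has degree at most `k + 1` in `X i` and at most `k` in the other variables, so vanishing
on the grid forces `v i = L (X i) * c i`, where `c i` does not involve `X i`; in particular a
coefficient of `v i` is zero as soon as the one obtained by raising the exponent of `X i` to `k + 1`
is zero (`coeff_eq_zero_of_grid`).

Let `m` be a monomial with some exponent equal to `k`.  The coefficient of `div v` at `m`, namely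
`∑ j, (m j + 1) * coeff (m + single j 1) (v j)`, is zero.  The terms with `m j = k` contribute
`(k + 1) * coeff m D` each, while those with `m j ≠ k` are controlled by the coefficient of `D` at a
monomial attaining `k` once more.  Induction on the number of exponents other than `k` gives
`coeff m D = 0` (`divergence_coeff_eq_zero`).  Hence all top coefficients of `v` vanish, and then
`v` does.
-/

open MvPolynomial MeasureTheory

/-- Membership in the Raviart–Thomas space `RT^{k-1}` on ℝ³. -/
def memRT (k : ℕ) (v : Fin 3 → MvPolynomial (Fin 3) ℝ) : Prop :=
  ∀ i j : Fin 3, (v i).degreeOf j ≤ if i = j then k else k - 1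

/-- Membership in the bubble space `B^k` on ℝ³. -/
def memB (k : ℕ) (q : Fin 3 → MvPolynomial (Fin 3) ℝ) : Prop :=
  ∀ i : Fin 3, ∀ m ∈ (q i).support, (∀ j : Fin 3, m j ≤ k) ∧ (∃ j : Fin 3, j ≠ i ∧ m j = k)

/-- The position vector field `r = (x, y, z)`. -/
noncomputable def posVF : Fin 3 → MvPolynomial (Fin 3) ℝ := fun i => X i

/-- Cross product of polynomial vector fields on ℝ³. -/
noncomputable def cross (a b : Fin 3 → MvPolynomial (Fin 3) ℝ) :
    Fin 3 → MvPolynomial (Fin 3) ℝ :=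
  ![a 1 * b 2 - a 2 * b 1, a 2 * b 0 - a 0 * b 2, a 0 * b 1 - a 1 * b 0]

/-- Curl of a polynomial vector field on ℝ³. -/
noncomputable def curl (w : Fin 3 → MvPolynomial (Fin 3) ℝ) :
    Fin 3 → MvPolynomial (Fin 3) ℝ :=
  ![pderiv 1 (w 2) - pderiv 2 (w 1), pderiv 2 (w 0) - pderiv 0 (w 2),
    pderiv 0 (w 1) - pderiv 1 (w 0)]

/-- Membership in the enhanced Raviart–Thomas space `V^k = RT^{k-1} + B̃^k`. -/
def memV (k : ℕ) (v : Fin 3 → MvPolynomial (Fin 3) ℝ) : Prop :=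
  ∃ a q : Fin 3 → MvPolynomial (Fin 3) ℝ,
    memRT k a ∧ memB k q ∧ v = a + curl (cross posVF q)

/-! ### Polynomials vanishing on a tensor-product grid -/

open Finsupp in
/-- A polynomial of degree at most `k + 1` in `X i` and at most `k` in the other variables that
vanishes on the grid of nodes `ξ` is `L (X i) * c`, with `L` the nodal polynomial and `c` free of
`X i`.  So its coefficient at `n` is a multiple of the one at `n.update i (k + 1)`. -/
lemma coeff_eq_zero_of_grid {k : ℕ} {ξ : Fin (k + 1) → ℝ} (hξ : Function.Injective ξ)
    (p : MvPolynomial (Fin 3) ℝ) (i : Fin 3)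
    (hdeg : ∀ n, coeff n p ≠ 0 → n i ≤ k + 1 ∧ ∀ j, j ≠ i → n j ≤ k)
    (hvan : ∀ idx : Fin 3 → Fin (k + 1), eval (fun j => ξ (idx j)) p = 0)
    (n : Fin 3 →₀ ℕ) (hn : coeff (n.update i (k + 1)) p = 0) : coeff n p = 0 := by
  classical
  set L : Polynomial ℝ := ∏ s : Fin (k + 1), (Polynomial.X - Polynomial.C (ξ s)) with hL
  have hLmonic : L.Monic := Polynomial.monic_prod_of_monic _ _ fun s _ => Polynomial.monic_X_sub_C _
  have hLdeg : L.natDegree = k + 1 := by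
    rw [hL, Polynomial.natDegree_prod_of_monic _ _ fun s _ => Polynomial.monic_X_sub_C _]
    simp
  have hLroot : ∀ s, L.eval (ξ s) = 0 := fun s => by
    rw [hL, Polynomial.eval_prod]
    exact Finset.prod_eq_zero (Finset.mem_univ s) (by simp)
  have hLtop : L.coeff (k + 1) = 1 := by rw [← hLdeg]; exact hLmonic
  -- `G = L (X i) * c`, where `X i ^ (k + 1) * c` is the part of `p` of degree `k + 1` in `X i`.
  set G : MvPolynomial (Fin 3) ℝ := ∑ m ∈ p.support with m i = k + 1,
    ∑ d ∈ Finset.range (k + 2), monomial (m.erase i + single i d) (coeff m p * L.coeff d) with hG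
  have hGcoeff : ∀ n : Fin 3 →₀ ℕ,
      coeff n G = coeff (n.update i (k + 1)) p * L.coeff (n i) := by
    intro n
    have key : ∀ m : Fin 3 →₀ ℕ, ∀ d, m i = k + 1 → m.erase i + single i d = n →
        m = n.update i (k + 1) ∧ d = n i := by
      intro m d hm h
      subst h
      refine ⟨?_, by simp⟩
      ext j
      by_cases hj : j = i
      · subst hj; simp [hm]
      · simp [hj, Finsupp.update_apply]
    simp only [hG, coeff_sum, coeff_monomial]
    rw [Finset.sum_eq_single (n.update i (k + 1))]
    · rw [Finset.sum_eq_single (n i)]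
      · rw [if_pos]
        ext j
        by_cases hj : j = i
        · subst hj; simp
        · simp [hj, Finsupp.update_apply]
      · intro d _ hd
        refine if_neg fun h => hd (key _ _ (by simp) h).2
      · intro h
        rw [Polynomial.coeff_eq_zero_of_natDegree_lt (by simp at h; omega)]
        simp
    · intro m hm hne
      refine Finset.sum_eq_zero fun d _ => if_neg fun h => ?_
      exact hne (key m d (Finset.mem_filter.1 hm).2 h).1
    · intro h
      have : coeff (n.update i (k + 1)) p = 0 := by
        by_contra h0
        exact h (by simp [h0])
      simp [this]
  have hGeval : ∀ idx : Fin 3 → Fin (k + 1), eval (fun j => ξ (idx j)) G = 0 := by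
    intro idx
    have hs : ∑ d ∈ Finset.range (k + 2), L.coeff d * ξ (idx i) ^ d = 0 := by
      rw [← hLroot (idx i), Polynomial.eval_eq_sum_range, hLdeg]
    rw [hG, map_sum]
    refine Finset.sum_eq_zero fun m _ => ?_
    have : ∀ d ∈ Finset.range (k + 2), eval (fun j => ξ (idx j))
        (monomial (m.erase i + single i d) (coeff m p * L.coeff d)) =
        eval (fun j => ξ (idx j)) (monomial (m.erase i) (coeff m p)) *
          (L.coeff d * ξ (idx i) ^ d) := by
      intro d _
      rw [monomial_add_single, map_mul, map_pow, eval_X, eval_monomial, eval_monomial]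
      ring
    rw [map_sum, Finset.sum_congr rfl this, ← Finset.mul_sum, hs, mul_zero]
  have hR : p - G = 0 := by
    refine eq_zero_of_eval_zero_at_prod_finset (p - G)
      (fun _ => Finset.univ.image ξ) (fun j => ?_) ?_
    · rw [Finset.card_image_of_injective _ hξ, Finset.card_univ, Fintype.card_fin,
        Nat.lt_succ_iff, degreeOf_le_iff]
      intro m hm
      by_contra! hlt
      refine MvPolynomial.mem_support_iff.1 hm ?_
      rw [coeff_sub, hGcoeff]
      by_cases hj : j = i
      · subst hj
        rcases Nat.lt_or_ge (k + 1) (m j) with h | h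
        · rw [Polynomial.coeff_eq_zero_of_natDegree_lt (by omega), mul_zero, sub_zero]
          by_contra h0
          have := (hdeg m h0).1
          omega
        · have h1 : m j = k + 1 := by omega
          have h2 : m.update j (k + 1) = m := by rw [← h1]; simp
          rw [h2, h1, hLtop]; ring
      · have h1 : coeff m p = 0 := by
          by_contra h0
          have := (hdeg m h0).2 j hj
          omega
        have h2 : coeff (m.update i (k + 1)) p = 0 := by
          by_contra h0
          have := (hdeg _ h0).2 j hj
          simp [Finsupp.update_apply, hj] at this
          omega
        rw [h1, h2]; ring
    · intro x hx
      choose idx hidx using fun j => Finset.mem_image.1 (hx j)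
      have : x = fun j => ξ (idx j) := funext fun j => (hidx j).2.symm
      rw [this, map_sub, hvan, hGeval, sub_zero]
  rw [sub_eq_zero.1 hR, hGcoeff, hn, zero_mul]

/-! ### Coefficients of `curl (r × q)` -/

/-- `curl (r × q) = (div q) r - (2 + E) q`, with `E` the Euler operator. -/
lemma curl_cross_apply (q : Fin 3 → MvPolynomial (Fin 3) ℝ) (i : Fin 3) :
    curl (cross posVF q) i =
      X i * ∑ j, pderiv j (q j) - 2 * q i - ∑ j, X j * pderiv j (q i) := by
  fin_cases i <;>
    simp [curl, cross, posVF, Fin.sum_univ_three, Derivation.leibniz, pderiv_X] <;>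
    ring

lemma coeff_X_mul_pderiv (p : MvPolynomial (Fin 3) ℝ) (j : Fin 3) (n : Fin 3 →₀ ℕ) :
    coeff n (X j * pderiv j p) = n j * coeff n p := by
  classical
  rw [coeff_X_mul']
  split_ifs with h
  · have h0 : n j ≠ 0 := by simpa using h
    rw [coeff_pderiv, Finsupp.sub_add_single_one_cancel h0, mul_comm]
    congr 1
    rw [Finsupp.tsub_apply, Finsupp.single_eq_same, Nat.cast_sub (by omega)]
    simp
  · have h0 : n j = 0 := by simpa using h
    simp [h0]

lemma coeff_curl_cross (q : Fin 3 → MvPolynomial (Fin 3) ℝ) (i : Fin 3) (n : Fin 3 →₀ ℕ) :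
    coeff n (curl (cross posVF q) i) =
      coeff n (X i * ∑ j, pderiv j (q j)) - (2 + ∑ j, (n j : ℝ)) * coeff n (q i) := by
  have h2 : (2 : MvPolynomial (Fin 3) ℝ) = C 2 := (map_ofNat C 2).symm
  rw [curl_cross_apply, coeff_sub, coeff_sub, coeff_sum, h2, coeff_C_mul]
  simp only [coeff_X_mul_pderiv]
  rw [← Finset.sum_mul]
  ring

lemma coeff_add_single_curl_cross (q : Fin 3 → MvPolynomial (Fin 3) ℝ) (i : Fin 3)
    (m : Fin 3 →₀ ℕ) :
    coeff (m + Finsupp.single i 1) (curl (cross posVF q) i) =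
      coeff m (∑ j, pderiv j (q j)) -
        (3 + ∑ j, (m j : ℝ)) * coeff (m + Finsupp.single i 1) (q i) := by
  rw [coeff_curl_cross, add_comm m, coeff_X_mul, add_comm _ m]
  congr 2
  simp [Finset.sum_add_distrib, Finsupp.single_apply]
  ring

/-- The coefficient of `div (curl (r × q)) = 0` at `m`. -/
lemma div_coeff_curl (q : Fin 3 → MvPolynomial (Fin 3) ℝ) (m : Fin 3 →₀ ℕ) :
    ∑ j, coeff (m + Finsupp.single j 1) (curl (cross posVF q) j) * (m j + 1) = 0 := by
  have hD : coeff m (∑ j, pderiv j (q j)) =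
      ∑ j, coeff (m + Finsupp.single j 1) (q j) * (m j + 1) := by
    simp only [coeff_sum, coeff_pderiv]
  simp only [coeff_add_single_curl_cross]
  rw [hD]
  simp only [Fin.sum_univ_three]
  ring

/-! ### Coefficients of `v = a + curl (r × q)` -/

section

variable {k : ℕ} {a q : Fin 3 → MvPolynomial (Fin 3) ℝ}

lemma memB.le (hq : memB k q) {i : Fin 3} {n : Fin 3 →₀ ℕ} (h : coeff n (q i) ≠ 0) (j : Fin 3) :
    n j ≤ k :=
  (hq i n (mem_support_iff.2 h)).1 j

lemma memRT.le (ha : memRT k a) {i : Fin 3} {n : Fin 3 →₀ ℕ} (h : coeff n (a i) ≠ 0) (j : Fin 3) :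
    n j ≤ if i = j then k else k - 1 :=
  degreeOf_le_iff.1 (ha i j) n (mem_support_iff.2 h)

/-- A component `v i` has degree at most `k + 1` in `X i` and at most `k` in the other variables. -/
lemma degree_bounds (ha : memRT k a) (hq : memB k q) (i : Fin 3) (n : Fin 3 →₀ ℕ)
    (h : coeff n ((a + curl (cross posVF q)) i) ≠ 0) :
    n i ≤ k + 1 ∧ ∀ j, j ≠ i → n j ≤ k := by
  classical
  by_cases h1 : coeff n (a i) = 0
  swap
  · have := ha.le h1
    refine ⟨by have := this i; simp at this; omega, fun j hj => ?_⟩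
    have := this j
    rw [if_neg (Ne.symm hj)] at this
    omega
  by_cases h2 : coeff n (q i) = 0
  swap
  · have := hq.le h2
    exact ⟨(this i).trans (by omega), fun j _ => this j⟩
  rw [Pi.add_apply, coeff_add, h1, zero_add, coeff_curl_cross, h2, mul_zero, sub_zero,
    coeff_X_mul'] at h
  split_ifs at h with hs
  · rw [coeff_sum] at h
    obtain ⟨j, -, hj⟩ := Finset.exists_ne_zero_of_sum_ne_zero h
    rw [coeff_pderiv] at hj
    have := hq.le (left_ne_zero_of_mul hj)
    refine ⟨?_, fun l hl => ?_⟩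
    · have := this i
      simp at this
      omega
    · have := this l
      simp [Finsupp.single_apply, Ne.symm hl] at this
      omega
  · exact absurd rfl h

/-- The coefficients of `v i` of degree `k + 1` in `X i` are coefficients of `div q`: the `a` and
`(2 + E) q` parts have degree at most `k` in `X i`. -/
lemma coeff_top_eq (ha : memRT k a) (hq : memB k q) (i : Fin 3) (m : Fin 3 →₀ ℕ) (hm : m i = k) :
    coeff (m + Finsupp.single i 1) ((a + curl (cross posVF q)) i) =
      coeff m (∑ j, pderiv j (q j)) := by
  have h1 : coeff (m + Finsupp.single i 1) (a i) = 0 := by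
    by_contra h
    have := ha.le h i
    simp at this
    omega
  have h2 : coeff (m + Finsupp.single i 1) (q i) = 0 := by
    by_contra h
    have := hq.le h i
    simp at this
    omega
  rw [Pi.add_apply, coeff_add, h1, coeff_add_single_curl_cross, h2]
  ring

/-- `div v = div a` has degree at most `k - 1` in each variable, so its coefficient at `m` is zero
when `m i = k`. -/
lemma div_coeff_eq_zero (hk : 1 ≤ k) (ha : memRT k a) (m : Fin 3 →₀ ℕ) (i : Fin 3) (hm : m i = k) :
    ∑ j, coeff (m + Finsupp.single j 1) ((a + curl (cross posVF q)) j) * (m j + 1) = 0 := by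
  simp only [Pi.add_apply, coeff_add, add_mul, Finset.sum_add_distrib, div_coeff_curl, add_zero]
  refine Finset.sum_eq_zero fun j _ => ?_
  rw [mul_eq_zero]
  left
  by_contra h
  have := ha.le h i
  by_cases hj : j = i
  · subst hj
    simp at this
    omega
  · simp [hj] at this
    omega

lemma update_eq (m : Fin 3 →₀ ℕ) (i : Fin 3) (b : ℕ) :
    m.update i (b + 1) = m.update i b + Finsupp.single i 1 := by
  classical
  ext j
  by_cases hj : j = i
  · subst hj; simp
  · simp [Finsupp.update_apply, hj]

lemma update_add_single (m : Fin 3 →₀ ℕ) (i : Fin 3) (b : ℕ) :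
    (m + Finsupp.single i 1).update i (b + 1) = m.update i b + Finsupp.single i 1 := by
  classical
  ext j
  by_cases hj : j = i
  · subst hj; simp
  · simp [Finsupp.update_apply, hj]

/-! ### Vanishing of the top coefficients -/

/-- The coefficients of `div q` that are also top coefficients of `v` vanish; `N` counts the
exponents of `m` other than `k`. -/
lemma divergence_coeff_eq_zero (hk : 1 ≤ k) {ξ : Fin (k + 1) → ℝ} (hξ : Function.Injective ξ)
    (ha : memRT k a) (hq : memB k q)
    (hvan : ∀ idx : Fin 3 → Fin (k + 1), ∀ i : Fin 3,
      eval (fun j => ξ (idx j)) ((a + curl (cross posVF q)) i) = 0)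
    (N : ℕ) : ∀ m : Fin 3 →₀ ℕ, (Finset.univ.filter fun j => m j ≠ k).card = N →
      ∀ i, m i = k → coeff m (∑ j, pderiv j (q j)) = 0 := by
  classical
  induction N using Nat.strong_induction_on with
  | _ N ih =>
    intro m hN i hi
    -- Where `m j ≠ k`, raising the exponent of `X j` to `k` lands in the induction hypothesis.
    have hterm : ∀ j, coeff (m + Finsupp.single j 1) ((a + curl (cross posVF q)) j) * (m j + 1) =
        coeff m (∑ j, pderiv j (q j)) * (if m j = k then (k : ℝ) + 1 else 0) := by
      intro j
      split_ifs with hj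
      · rw [coeff_top_eq ha hq j m hj, hj]
      · rw [mul_zero, mul_eq_zero]
        left
        refine coeff_eq_zero_of_grid hξ _ j (degree_bounds ha hq j) (fun idx => hvan idx j) _ ?_
        rw [update_add_single, coeff_top_eq ha hq j _ (by simp)]
        refine ih _ ?_ (m.update j k) rfl j (by simp)
        rw [← hN]
        refine Finset.card_lt_card (Finset.ssubset_iff_of_subset ?_ |>.2 ⟨j, by simp [hj], by simp⟩)
        intro l hl
        by_cases hlj : l = j
        · subst hlj; simp at hl
        · simpa [Finsupp.update_apply, hlj] using hl
    have hsum := div_coeff_eq_zero (q := q) hk ha m i hi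
    rw [Finset.sum_congr rfl fun j _ => hterm j, ← Finset.mul_sum, mul_eq_zero] at hsum
    refine hsum.resolve_right (ne_of_gt ?_)
    refine Finset.sum_pos' (fun j _ => ?_) ⟨i, Finset.mem_univ i, ?_⟩
    · split_ifs <;> positivity
    · rw [if_pos hi]; positivity

end

/-- if `v ∈ V^k` vanishes at every tensor-product Gauss–Lobatto node of
order `k`, then `v = 0`. -/
theorem vanish_at_gauss_lobatto_nodes (k : ℕ) (hk : 1 ≤ k)
    (ξ lam : Fin (k + 1) → ℝ)
    (hmono : StrictMono ξ) (hfirst : ξ 0 = -1) (hlast : ξ (Fin.last k) = 1)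
    (hpos : ∀ i, 0 < lam i)
    (hexact : ∀ p : Polynomial ℝ, p.natDegree ≤ 2 * k - 1 →
      ∑ i, lam i * p.eval (ξ i) = ∫ t in Set.Icc (-1:ℝ) 1, p.eval t)
    (v : Fin 3 → MvPolynomial (Fin 3) ℝ) (hv : memV k v)
    (hvan : ∀ idx : Fin 3 → Fin (k + 1), ∀ i : Fin 3,
      eval (fun j => ξ (idx j)) (v i) = 0) :
    v = 0 := by
  obtain ⟨a, q, ha, hq, rfl⟩ := hv
  have hD := divergence_coeff_eq_zero hk hmono.injective ha hq hvan
  funext i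
  ext n
  rw [Pi.zero_apply, coeff_zero]
  refine coeff_eq_zero_of_grid hmono.injective _ i (degree_bounds ha hq i)
    (fun idx => hvan idx i) n ?_
  rw [update_eq, coeff_top_eq ha hq i _ (by simp)]
  exact hD _ _ rfl i (by simp)
end

section
/- Let v = (v₁,v₂,v₃) ∈ V^k and suppose that for each of the six faces ê of the cube [−1,1]³ and every polynomial p of degree at most k in each of the two face variables, the integral of (v·n) p over ê vanishes (n the outward unit normal). Then there exist polynomials w₁, w₂, w₃ with deg_x w₁ ≤ k−1, deg_y w₁ ≤ k, deg_z w₁ ≤ k; deg_y w₂ ≤ k−1, deg_x w₂ ≤ k, deg_z w₂ ≤ k; deg_z w₃ ≤ k−1, deg_x w₃ ≤ k, deg_y w₃ ≤ k, such that v₁ = (1−x²)w₁, v₂ = (1−y²)w₂, and v₃ = (1−z²)w₃. -/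
/-!
Only two features of `V^k` are used: for `v ∈ V^k` the component `v i` has degree at most `k + 1`
in the variable `X i` and at most `k` in the two other variables (`degreeOf_le_of_memV`). The bound
holds for `curl (r × q)`, whose component `i` is a signed sum of terms `∂_l (X l * q i)` and
`∂_l (X i * q l)` with `l ≠ i`: the former keep all degree bounds of `q i`, since `∂_l` undoes the
increase caused by `X l`, and the latter raise only the degree in `X i`, by one.

Hence the restriction `restr i s (v i)` of `v i` to the face `X i = s`, with `s = ±1`, is itself an
admissible test polynomial. Testing against it shows that the integral of its square over the face
vanishes, so by continuity it vanishes on the face, hence identically (`restr_eq_zero`). Since a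
polynomial is congruent to its restriction modulo `X i - s` (`dvd_sub_restr`), both `X i - 1` and
`X i + 1` divide `v i`. They are coprime, so `1 - X i ^ 2` divides `v i`, and additivity of the
degrees under multiplication gives the bounds on the quotient.
-/

open MvPolynomial MeasureTheory

/-- The point of the face `{x_i = s}` of `[-1,1]³` with face coordinates `(u, w)`. -/
def facePt (i : Fin 3) (s u w : ℝ) : Fin 3 → ℝ :=
  fun j => if j = i then s else if (if i = 0 then j = 1 else j = 0) then u else w

/-- A derivative in the variable `i` lowers the degree in that variable and raises no other. The
truncated subtraction is harmless: it covers polynomials not depending on `X i`. -/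
lemma degreeOf_pderiv_le (i j : Fin 3) (p : MvPolynomial (Fin 3) ℝ) :
    (pderiv i p).degreeOf j ≤ p.degreeOf j - if i = j then 1 else 0 := by
  conv_lhs => rw [p.as_sum, map_sum]
  refine (degreeOf_sum_le _ _ _).trans (Finset.sup_le fun m hm => ?_)
  rw [pderiv_monomial]
  have hm' := monomial_le_degreeOf j hm
  by_cases h0 : coeff m p * (m i : ℝ) = 0
  · simp [h0]
  · rw [degreeOf_monomial_eq _ _ h0, Finsupp.tsub_apply, Finsupp.single_apply]
    exact Nat.sub_le_sub_right hm' _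

/-- The terms `∂_l (X l * p)` of `curl (r × q)` keep all degree bounds of `p`. -/
lemma degreeOf_pderiv_X_mul_self (k : ℕ) (l j : Fin 3) (p : MvPolynomial (Fin 3) ℝ)
    (hp : p.degreeOf j ≤ k) : (pderiv l (X l * p)).degreeOf j ≤ k := by
  have h1 := degreeOf_pderiv_le l j (X l * p)
  have h2 := degreeOf_mul_le j (X l) p
  rw [degreeOf_X] at h2
  by_cases h : l = j
  · subst h; simp only [if_true] at h1 h2; omega
  · simp only [h, Ne.symm h, if_false] at h1 h2; omega

/-- The terms `∂_l (X i * p)` of `curl (r × q)` raise only the degree in `X i`. -/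
lemma degreeOf_pderiv_X_mul (k : ℕ) (i l j : Fin 3) (p : MvPolynomial (Fin 3) ℝ)
    (hp : p.degreeOf j ≤ k) :
    (pderiv l (X i * p)).degreeOf j ≤ if i = j then k + 1 else k := by
  have h1 := degreeOf_pderiv_le l j (X i * p)
  have h2 := degreeOf_mul_le j (X i) p
  rw [degreeOf_X] at h2
  by_cases h : i = j
  · subst h; simp only [if_true] at h2 ⊢; omega
  · simp only [h, Ne.symm h, if_false] at h2 ⊢; omega

lemma degreeOf_add_le' {j : Fin 3} {n : ℕ} {p q : MvPolynomial (Fin 3) ℝ}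
    (hp : p.degreeOf j ≤ n) (hq : q.degreeOf j ≤ n) : (p + q).degreeOf j ≤ n :=
  (degreeOf_add_le _ _ _).trans (max_le hp hq)

lemma degreeOf_sub_le' {j : Fin 3} {n : ℕ} {p q : MvPolynomial (Fin 3) ℝ}
    (hp : p.degreeOf j ≤ n) (hq : q.degreeOf j ≤ n) : (p - q).degreeOf j ≤ n :=
  (degreeOf_sub_le _ _ _).trans (max_le hp hq)

lemma degreeOf_le_of_memV {k : ℕ} {v : Fin 3 → MvPolynomial (Fin 3) ℝ} (hv : memV k v)
    (i j : Fin 3) : (v i).degreeOf j ≤ if i = j then k + 1 else k := by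
  obtain ⟨a, q, ha, hq, rfl⟩ := hv
  have hq' : ∀ l j, (q l).degreeOf j ≤ k := fun l j =>
    degreeOf_le_iff.2 fun m hm => (hq l m hm).1 j
  have hX := fun i l m => degreeOf_pderiv_X_mul k i l j (q m) (hq' m j)
  have hS : ∀ l m, (pderiv l (X l * q m)).degreeOf j ≤ if i = j then k + 1 else k := fun l m =>
    (degreeOf_pderiv_X_mul_self k l j (q m) (hq' m j)).trans (by split_ifs <;> omega)
  refine degreeOf_add_le' ((ha i j).trans (by split_ifs <;> omega)) ?_
  obtain rfl | rfl | rfl : i = 0 ∨ i = 1 ∨ i = 2 := by fin_cases i <;> simp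
  · change degreeOf j (pderiv 1 (X 0 * q 1 - X 1 * q 0) -
      pderiv 2 (X 2 * q 0 - X 0 * q 2)) ≤ _
    rw [map_sub, map_sub]
    exact degreeOf_sub_le' (degreeOf_sub_le' (hX 0 1 1) (hS 1 0))
      (degreeOf_sub_le' (hS 2 0) (hX 0 2 2))
  · change degreeOf j (pderiv 2 (X 1 * q 2 - X 2 * q 1) -
      pderiv 0 (X 0 * q 1 - X 1 * q 0)) ≤ _
    rw [map_sub, map_sub]
    exact degreeOf_sub_le' (degreeOf_sub_le' (hX 1 2 2) (hS 2 1))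
      (degreeOf_sub_le' (hS 0 1) (hX 1 0 0))
  · change degreeOf j (pderiv 0 (X 2 * q 0 - X 0 * q 2) -
      pderiv 1 (X 1 * q 2 - X 2 * q 1)) ≤ _
    rw [map_sub, map_sub]
    exact degreeOf_sub_le' (degreeOf_sub_le' (hX 2 0 0) (hS 0 2))
      (degreeOf_sub_le' (hS 1 2) (hX 2 1 1))

/-- The restriction of `f` to the plane `X i = s`, as a polynomial in the same three variables in
which `X i` no longer occurs. -/
noncomputable def restr (i : Fin 3) (s : ℝ) (f : MvPolynomial (Fin 3) ℝ) :
    MvPolynomial (Fin 3) ℝ :=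
  aeval (Function.update X i (C s)) f

lemma eval_restr (i : Fin 3) (s : ℝ) (f : MvPolynomial (Fin 3) ℝ) (x : Fin 3 → ℝ) :
    eval x (restr i s f) = eval (Function.update x i s) f := by
  have : ((aeval x).comp (aeval (Function.update X i (C s))) :
      MvPolynomial (Fin 3) ℝ →ₐ[ℝ] ℝ) = aeval (Function.update x i s) := by
    ext j
    by_cases h : j = i
    · subst h; simp
    · simp [h]
  exact congrArg (fun φ => φ f) this

lemma degreeOf_restr_le (i : Fin 3) (s : ℝ) (f : MvPolynomial (Fin 3) ℝ) (j : Fin 3) :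
    (restr i s f).degreeOf j ≤ if i = j then 0 else f.degreeOf j := by
  rw [restr, aeval_def, eval₂_eq']
  refine (degreeOf_sum_le _ _ _).trans (Finset.sup_le fun m hm => ?_)
  refine (degreeOf_C_mul_le _ _ _).trans ((degreeOf_prod_le _ _ _).trans ?_)
  have hm' := monomial_le_degreeOf j hm
  -- only the factor `l = j` contributes, and not even that one when `j = i`
  have key : ∀ l, (Function.update X i (C s) l ^ m l : MvPolynomial (Fin 3) ℝ).degreeOf j ≤
      if l = j then (if i = j then 0 else m j) else 0 := by
    intro l
    refine (degreeOf_pow_le _ _ _).trans ?_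
    by_cases hl : l = i
    · subst hl; simp
    · rw [Function.update_of_ne hl, degreeOf_X]
      by_cases hj : l = j
      · subst hj; simp [Ne.symm hl]
      · simp [hj, Ne.symm hj]
  refine (Finset.sum_le_sum fun l _ => key l).trans ?_
  rw [Finset.sum_ite_eq' Finset.univ j, if_pos (Finset.mem_univ _)]
  split_ifs <;> omega

lemma dvd_sub_restr (i : Fin 3) (s : ℝ) (f : MvPolynomial (Fin 3) ℝ) :
    (X i - C s) ∣ f - restr i s f := by
  rw [← Ideal.mem_span_singleton, ← Ideal.Quotient.eq]
  set I := Ideal.span {(X i - C s : MvPolynomial (Fin 3) ℝ)}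
  -- the quotient map and its composite with the restriction are algebra maps agreeing on variables
  have : Ideal.Quotient.mkₐ ℝ I =
      (Ideal.Quotient.mkₐ ℝ I).comp (aeval (Function.update X i (C s))) := by
    ext j
    by_cases h : j = i
    · subst h
      simp only [AlgHom.comp_apply, aeval_X, Function.update_self]
      exact Ideal.Quotient.eq.2 (Ideal.mem_span_singleton_self _)
    · simp [h]
  exact congrArg (fun φ => φ f) this

lemma eqOn_zero_of_setIntegral_eq_zero {f : ℝ → ℝ} (hf : Continuous f) (h0 : ∀ x, 0 ≤ f x)
    (h : ∫ x in Set.Icc (-1 : ℝ) 1, f x = 0) : ∀ x ∈ Set.Icc (-1 : ℝ) 1, f x = 0 := by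
  have h1 := (setIntegral_eq_zero_iff_of_nonneg_ae (Filter.Eventually.of_forall h0)
    (hf.integrableOn_Icc (μ := volume))).1 h
  exact Measure.eqOn_Icc_of_ae_eq volume (by norm_num) h1 hf.continuousOn continuousOn_const

lemma continuous_facePt (i : Fin 3) (s : ℝ) :
    Continuous fun z : ℝ × ℝ => facePt i s z.1 z.2 := by
  refine continuous_pi fun j => ?_
  unfold facePt
  split_ifs <;> fun_prop

/-- A polynomial whose square integrates to zero over a face has zero restriction to the plane
containing that face. -/
lemma restr_eq_zero (i : Fin 3) (s : ℝ) (f : MvPolynomial (Fin 3) ℝ)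
    (h : (∫ u in Set.Icc (-1:ℝ) 1, ∫ w in Set.Icc (-1:ℝ) 1,
      (eval (facePt i s u w) f) ^ 2) = 0) : restr i s f = 0 := by
  have hc : Continuous fun z : ℝ × ℝ => (eval (facePt i s z.1 z.2) f) ^ 2 :=
    ((MvPolynomial.continuous_eval f).comp (continuous_facePt i s)).pow 2
  have hu := eqOn_zero_of_setIntegral_eq_zero
    (continuous_parametric_integral_of_continuous (μ := volume)
      (f := fun u w => (eval (facePt i s u w) f) ^ 2) hc isCompact_Icc)
    (fun u => integral_nonneg fun w => sq_nonneg _) h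
  have huw : ∀ u ∈ Set.Icc (-1:ℝ) 1, ∀ w ∈ Set.Icc (-1:ℝ) 1, eval (facePt i s u w) f = 0 :=
    fun u hu' w hw => pow_eq_zero_iff two_ne_zero |>.1 <|
      eqOn_zero_of_setIntegral_eq_zero (hc.comp (Continuous.prodMk_right u))
        (fun w => sq_nonneg _) (hu u hu') w hw
  refine funext_set (fun _ => Set.Icc (-1:ℝ) 1)
    (fun _ => Set.Icc_infinite (by norm_num)) fun x hx => ?_
  rw [map_zero, eval_restr]
  -- the projection of `x` to the face, in the face coordinates of `facePt`
  have : Function.update x i s =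
      facePt i s (x (if i = 0 then 1 else 0)) (x (if i = 2 then 1 else 2)) := by
    funext j
    fin_cases i <;> fin_cases j <;> simp [facePt]
  rw [this]
  exact huw _ (hx _ trivial) _ (hx _ trivial)

/-- if all facet degrees of freedom of `v ∈ V^k` vanish, then each
component `v_i` factors as `(1 - x_i²) w_i` with the indicated degree structure. -/
theorem bubble_factorization (k : ℕ) (hk : 1 ≤ k)
    (v : Fin 3 → MvPolynomial (Fin 3) ℝ) (hv : memV k v)
    (hface : ∀ i : Fin 3, ∀ s : ℝ, s = 1 ∨ s = -1 →
      ∀ p : MvPolynomial (Fin 3) ℝ, p.degreeOf i = 0 → (∀ j : Fin 3, p.degreeOf j ≤ k) →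
      (∫ u in Set.Icc (-1:ℝ) 1, ∫ w in Set.Icc (-1:ℝ) 1,
        s * eval (facePt i s u w) (v i) * eval (facePt i s u w) p) = 0) :
    ∃ w : Fin 3 → MvPolynomial (Fin 3) ℝ,
      (∀ i : Fin 3, (w i).degreeOf i ≤ k - 1) ∧
      (∀ i j : Fin 3, j ≠ i → (w i).degreeOf j ≤ k) ∧
      (∀ i : Fin 3, v i = (1 - X i ^ 2) * w i) := by
  have hdeg := degreeOf_le_of_memV hv
  -- testing a face against the restriction of `v i` to that face
  have hr : ∀ i s, s = 1 ∨ s = -1 → (X i - C s) ∣ v i := by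
    intro i s hs
    have hd := degreeOf_restr_le i s (v i)
    have h1 := hface i s hs (restr i s (v i)) (by simpa using hd i) fun j => by
      have h2 := hd j
      have h3 := hdeg i j
      split_ifs at h2 h3 <;> omega
    have hs0 : s ≠ 0 := by rcases hs with rfl | rfl <;> norm_num
    have hupd : ∀ u w, Function.update (facePt i s u w) i s = facePt i s u w := fun u w =>
      Function.update_eq_self_iff.2 (by simp [facePt])
    have h0 : restr i s (v i) = 0 := by
      refine restr_eq_zero i s (v i) ?_
      simp only [eval_restr, hupd, mul_assoc, integral_const_mul, ← pow_two] at h1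
      exact (mul_eq_zero.1 h1).resolve_left hs0
    simpa [h0] using dvd_sub_restr i s (v i)
  have hdvd : ∀ i, ∃ w, v i = (1 - X i ^ 2) * w := by
    intro i
    have hcop : IsCoprime (X i - C 1 : MvPolynomial (Fin 3) ℝ) (X i - C (-1)) := by
      refine ⟨C (-1 / 2), C (1 / 2), ?_⟩
      have : (C (-1 / 2) : MvPolynomial (Fin 3) ℝ) = - C (1 / 2) := by rw [← C_neg]; norm_num
      have h2 : (C (1 / 2) : MvPolynomial (Fin 3) ℝ) * 2 = 1 := by
        rw [← C_1, ← map_ofNat (C : ℝ →+* MvPolynomial (Fin 3) ℝ) 2, ← C_mul]; norm_num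
      rw [this, C_neg, C_1]
      linear_combination h2
    obtain ⟨w, hw⟩ := hcop.mul_dvd (hr i 1 (Or.inl rfl)) (hr i (-1) (Or.inr rfl))
    refine ⟨-w, ?_⟩
    rw [hw, C_neg, C_1]
    ring
  choose w hw using hdvd
  have hne : ∀ i, (1 - X i ^ 2 : MvPolynomial (Fin 3) ℝ) ≠ 0 := fun i h => by
    simpa using congrArg (eval (0 : Fin 3 → ℝ)) h
  have h2 : ∀ i, 2 ≤ (1 - X i ^ 2 : MvPolynomial (Fin 3) ℝ).degreeOf i := fun i => by
    have h := degreeOf_sub_le i (1 : MvPolynomial (Fin 3) ℝ) (1 - X i ^ 2)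
    rw [sub_sub_cancel, degreeOf_X_self_pow, degreeOf_one] at h
    simpa using h
  refine ⟨w, fun i => ?_, fun i j hij => ?_, hw⟩
  · by_cases h0 : w i = 0
    · simp [h0]
    have h := hdeg i i
    rw [hw i, degreeOf_mul_eq (hne i) h0, if_pos rfl] at h
    have := h2 i
    omega
  · by_cases h0 : w i = 0
    · simp [h0]
    have h := hdeg i j
    rw [hw i, degreeOf_mul_eq (hne i) h0, if_neg hij.symm] at h
    omega
end
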